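/- Let n ≥ 2 be an integer and λ a real number such that 2λ − n + 2 is not a nonpositive integer and λ − (n−3)/2 is not a nonpositive integer. Then for every real s with 0 < s < 1: F(λ, λ − n/2 + 1; 2λ − n + 2; 4s/(1+s)²) = (1+s)^{2λ} · F(λ, (n−1)/2; λ − (n−3)/2; s²). (This is the quadratic hypergeometric transformation instance derived in the proof of Proposition 4.1; note 0 < 4s/(1+s)² < 1 and 0 < s² < 1.) -/

import Mathlib

/-- Pochhammer symbol `(x)_k = x (x+1) ⋯ (x+k-1)`, with `(x)_0 = 1`. -/
noncomputable def poch (x : ℝ) : ℕ → ℝ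
  | 0 => 1
  | k + 1 => poch x k * (x + k)

/-- Gauss hypergeometric series `F(a,b;c;x) = ∑_{k≥0} (a)_k (b)_k / ((c)_k k!) x^k`. -/
noncomputable def hypF (a b c x : ℝ) : ℝ :=
  ∑' k : ℕ, poch a k * poch b k / (poch c k * (k.factorial : ℝ)) * x ^ k

/-!
Divide Gauss's quadratic transformation by `(1 + s) ^ (2 * a)`. Then its left-hand side is a power
of `1 + s` times the pullback of a hypergeometric function along `s ↦ 4 s / (1 + s)²`, and its
right-hand side is the pullback of another one along `s ↦ s²`; by the chain rule both satisfy the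
same second-order linear equation. At its regular singular point `s = 0` the exponents are `0` and
`1 - 2 b`, so when `2 b` is not a nonpositive integer, comparing leading terms shows that an
analytic solution vanishing at `0` vanishes near `0`. Both functions equal `1` at `0`; hence they
agree near `0` and, by the identity theorem, on any interval around `0` where both are analytic.
-/

open Filter Topology FormalMultilinearSeries

theorem hasSum_mul_of_hasSum_succ {R : Type*} [CommRing R] [TopologicalSpace R]
    [IsTopologicalRing R] {w : ℕ → R} {x S : R} (hw : w 0 = 0)
    (h : HasSum (fun k ↦ w (k + 1) * x ^ k) S) : HasSum (fun k ↦ w k * x ^ k) (x * S) := by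
  rw [← hasSum_nat_add_iff' 1]
  simpa [hw, pow_succ, mul_comm, mul_left_comm, mul_assoc] using h.mul_left x

section PowerSeries

variable {𝕜 : Type*} [NontriviallyNormedField 𝕜] {f : 𝕜 → 𝕜} {u : ℕ → 𝕜} {r : ENNReal}

theorem hasSum_of_hasFPowerSeriesOnBall_ofScalars {x : 𝕜}
    (hf : HasFPowerSeriesOnBall f (ofScalars 𝕜 u) 0 r) (hx : x ∈ Metric.eball 0 r) :
    HasSum (fun k ↦ u k * x ^ k) (f x) := by
  simpa only [ofScalars_apply_eq, smul_eq_mul, zero_add] using hf.hasSum hx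

theorem hasFPowerSeriesOnBall_deriv_ofScalars [CompleteSpace 𝕜] {z : 𝕜}
    (hf : HasFPowerSeriesOnBall f (ofScalars 𝕜 u) z r) :
    HasFPowerSeriesOnBall (deriv f) (ofScalars 𝕜 fun k ↦ (k + 1) * u (k + 1)) z r := by
  convert! (ContinuousLinearMap.apply 𝕜 𝕜 (1 : 𝕜)).comp_hasFPowerSeriesOnBall hf.fderiv using 1
  ext k
  simp [ofScalars]

/-- The hypergeometric differential equation
`x (1 - x) f'' + (c - (a + b + 1) x) f' - a b f = 0` at the point `x`, satisfied by
`f = ₂F₁ a b c`. -/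
def SolvesHypergeometricODE (a b c : 𝕜) (f : 𝕜 → 𝕜) (x : 𝕜) : Prop :=
  x * (1 - x) * iteratedDeriv 2 f x + (c - (a + b + 1) * x) * deriv f x - a * b * f x = 0

theorem solvesHypergeometricODE_of_recurrence [CompleteSpace 𝕜] {a b c x : 𝕜}
    (hf : HasFPowerSeriesOnBall f (ofScalars 𝕜 u) 0 r) (hx : x ∈ Metric.eball 0 r)
    (hu : ∀ k : ℕ, (c + k) * (k + 1) * u (k + 1) = (a + k) * (b + k) * u k) :
    SolvesHypergeometricODE a b c f x := by
  have hf' := hasFPowerSeriesOnBall_deriv_ofScalars hf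
  have sum_f := hasSum_of_hasFPowerSeriesOnBall_ofScalars hf hx
  have sum_f' := hasSum_of_hasFPowerSeriesOnBall_ofScalars hf' hx
  have sum_f'' := hasSum_of_hasFPowerSeriesOnBall_ofScalars
    (hasFPowerSeriesOnBall_deriv_ofScalars hf') hx
  have sum_xf' : HasSum (fun k ↦ k * u k * x ^ k) (x * deriv f x) :=
    hasSum_mul_of_hasSum_succ (w := fun k ↦ k * u k) (by simp) (by simpa using sum_f')
  have sum_xf'' : HasSum (fun k ↦ k * ((k + 1) * u (k + 1)) * x ^ k) (x * deriv (deriv f) x) :=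
    hasSum_mul_of_hasSum_succ (w := fun k ↦ k * ((k + 1) * u (k + 1))) (by simp)
      (by simpa using sum_f'')
  have sum_xxf'' : HasSum (fun k ↦ (k - 1) * (k * u k) * x ^ k) (x * (x * deriv (deriv f) x)) :=
    hasSum_mul_of_hasSum_succ (w := fun k ↦ (k - 1) * (k * u k)) (by simp)
      (by simpa using sum_xf'')
  have sum_ode := (((sum_xf''.sub sum_xxf'').add (sum_f'.mul_left c)).sub
    (sum_xf'.mul_left (a + b + 1))).sub (sum_f.mul_left (a * b))
  have ode : x * deriv (deriv f) x - x * (x * deriv (deriv f) x) + c * deriv f x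
      - (a + b + 1) * (x * deriv f x) - a * b * f x = 0 := by
    refine sum_ode.unique (hasSum_zero.congr_fun fun k ↦ ?_)
    linear_combination x ^ k * hu k
  rw [SolvesHypergeometricODE, iteratedDeriv_succ, iteratedDeriv_one]
  linear_combination ode

end PowerSeries

section OrdinaryHypergeometric

variable {𝕂 : Type*} [RCLike 𝕂]

theorem one_le_radius_ordinaryHypergeometricSeries (a b c : 𝕂) :
    1 ≤ (ordinaryHypergeometricSeries 𝕂 a b c).radius := by
  by_cases! ha : ∃ k : ℕ, a = -k
  · obtain ⟨k, rfl⟩ := ha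
    exact ordinaryHypergeometric_radius_top_of_neg_nat₁ 𝕂 b c ▸ le_top
  by_cases! hb : ∃ k : ℕ, b = -k
  · obtain ⟨k, rfl⟩ := hb
    exact ordinaryHypergeometric_radius_top_of_neg_nat₂ 𝕂 a c ▸ le_top
  by_cases! hc : ∃ k : ℕ, c = -k
  · obtain ⟨k, rfl⟩ := hc
    exact ordinaryHypergeometric_radius_top_of_neg_nat₃ 𝕂 a b ▸ le_top
  refine (ordinaryHypergeometricSeries_radius_eq_one 𝕂 a b c fun k ↦ ?_).ge
  exact ⟨fun h ↦ ha k (by simp [h]), fun h ↦ hb k (by simp [h]), fun h ↦ hc k (by simp [h])⟩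

theorem hasFPowerSeriesOnBall_ordinaryHypergeometric (a b c : 𝕂) :
    HasFPowerSeriesOnBall (₂F₁ a b c) (ordinaryHypergeometricSeries 𝕂 a b c) 0 1 :=
  have h := one_le_radius_ordinaryHypergeometricSeries a b c
  ((ordinaryHypergeometricSeries 𝕂 a b c).hasFPowerSeriesOnBall (one_pos.trans_le h)).mono
    one_pos h

theorem mem_eball_zero_one_iff_norm_lt_one {E : Type*} [SeminormedAddGroup E] {x : E} :
    x ∈ Metric.eball 0 1 ↔ ‖x‖ < 1 := by
  rw [← ENNReal.ofReal_one, Metric.eball_ofReal, mem_ball_zero_iff]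

theorem analyticAt_ordinaryHypergeometric (a b c : 𝕂) {x : 𝕂} (hx : ‖x‖ < 1) :
    AnalyticAt 𝕂 (₂F₁ a b c) x :=
  (hasFPowerSeriesOnBall_ordinaryHypergeometric a b c).analyticAt_of_mem
    (mem_eball_zero_one_iff_norm_lt_one.mpr hx)

theorem ordinaryHypergeometricCoefficient_succ (a b : 𝕂) {c : 𝕂} (hc : ∀ k : ℕ, c ≠ -k) (k : ℕ) :
    (c + k) * (k + 1) * ordinaryHypergeometricCoefficient a b c (k + 1) =
      (a + k) * (b + k) * ordinaryHypergeometricCoefficient a b c k := by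
  have hck : c + k ≠ 0 := fun h ↦ hc k (eq_neg_of_add_eq_zero_left h)
  have hk : (k : 𝕂) + 1 ≠ 0 := Nat.cast_add_one_ne_zero k
  simp only [ordinaryHypergeometricCoefficient, ascPochhammer_succ_eval, Nat.factorial_succ,
    Nat.cast_mul, Nat.cast_succ, mul_inv]
  field_simp

theorem solvesHypergeometricODE_ordinaryHypergeometric (a b : 𝕂) {c x : 𝕂}
    (hc : ∀ k : ℕ, c ≠ -k) (hx : ‖x‖ < 1) : SolvesHypergeometricODE a b c (₂F₁ a b c) x :=
  solvesHypergeometricODE_of_recurrence (hasFPowerSeriesOnBall_ordinaryHypergeometric a b c)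
    (mem_eball_zero_one_iff_norm_lt_one.mpr hx) (ordinaryHypergeometricCoefficient_succ a b hc)

end OrdinaryHypergeometric

theorem poch_eq_eval_ascPochhammer (x : ℝ) (k : ℕ) : poch x k = (ascPochhammer ℝ k).eval x := by
  induction k with
  | zero => simp [poch]
  | succ k ih => rw [poch, ih, ascPochhammer_succ_eval]

theorem hypF_eq_ordinaryHypergeometric (a b c x : ℝ) : hypF a b c x = ₂F₁ a b c x := by
  rw [hypF, ordinaryHypergeometric_eq_tsum]
  refine tsum_congr fun k ↦ ?_
  simp only [poch_eq_eval_ascPochhammer, smul_eq_mul]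
  ring

section SingularODE

variable {𝕜 : Type*} [NontriviallyNormedField 𝕜]

theorem mul_deriv_pow_mul {h : 𝕜 → 𝕜} {x : 𝕜} (hh : DifferentiableAt 𝕜 h x) (j : ℕ) :
    x * deriv (fun y ↦ y ^ j * h y) x = x ^ j * (j * h x + x * deriv h x) := by
  rw [deriv_fun_mul (by fun_prop) hh, deriv_pow_field]
  cases j with
  | zero => simp
  | succ j =>
    simp only [Nat.add_sub_cancel]
    ring

theorem deriv_pow_succ_mul {h : 𝕜 → 𝕜} {x : 𝕜} (hh : DifferentiableAt 𝕜 h x) (j : ℕ) :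
    deriv (fun y ↦ y ^ (j + 1) * h y) x = x ^ j * ((j + 1) * h x + x * deriv h x) := by
  rw [deriv_fun_mul (by fun_prop) hh, deriv_pow_field]
  simp only [Nat.add_sub_cancel, Nat.cast_succ]
  ring

theorem eventually_eq_zero_of_singular_ode [CompleteSpace 𝕜] [CharZero 𝕜] {f p q r : 𝕜 → 𝕜}
    (hp : ContinuousAt p 0) (hq : ContinuousAt q 0) (hr : ContinuousAt r 0)
    (hpq : ∀ j : ℕ, j * p 0 + q 0 ≠ 0) (hf : AnalyticAt 𝕜 f 0) (hf0 : f 0 = 0)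
    (hode : ∀ᶠ x in 𝓝 0, x * p x * iteratedDeriv 2 f x + q x * deriv f x + r x * f x = 0) :
    ∀ᶠ x in 𝓝 0, f x = 0 := by
  by_contra hf_ne
  obtain ⟨m, g, hg, hg0, hfg⟩ := hf.exists_eventuallyEq_pow_smul_nonzero_iff.mpr hf_ne
  simp only [sub_zero, smul_eq_mul] at hfg
  obtain _ | j := m
  · exact hg0 (by simpa [hf0, eq_comm] using hfg.self_of_nhds)
  set h : 𝕜 → 𝕜 := fun x ↦ (j + 1) * g x + x * deriv g x with h_def
  have hh : AnalyticAt 𝕜 h 0 := by fun_prop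
  have deriv_f : ∀ᶠ x in 𝓝 0, deriv f x = x ^ j * h x := by
    filter_upwards [EventuallyEq.deriv hfg, hg.eventually_analyticAt] with x hx hgx
    rw [hx, deriv_pow_succ_mul hgx.differentiableAt]
  have deriv_deriv_f : ∀ᶠ x in 𝓝 0,
      x * iteratedDeriv 2 f x = x ^ j * (j * h x + x * deriv h x) := by
    filter_upwards [EventuallyEq.deriv deriv_f, hh.eventually_analyticAt] with x hx hhx
    rw [iteratedDeriv_succ, iteratedDeriv_one, hx, mul_deriv_pow_mul hhx.differentiableAt]
  set Φ : 𝕜 → 𝕜 := fun x ↦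
    p x * (j * h x + x * deriv h x) + q x * h x + r x * (x * g x) with Φ_def
  have Φ_eq_zero : ∀ᶠ x in 𝓝[≠] 0, Φ x = 0 := by
    filter_upwards [nhdsWithin_le_nhds hode, nhdsWithin_le_nhds hfg, nhdsWithin_le_nhds deriv_f,
      nhdsWithin_le_nhds deriv_deriv_f, self_mem_nhdsWithin] with x ode f_eq f'_eq f''_eq hx
    refine (mul_eq_zero_iff_left (pow_ne_zero j hx)).mp ?_
    rw [f_eq, f'_eq] at ode
    linear_combination ode - p x * f''_eq
  have Φ_cont : ContinuousAt Φ 0 := by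
    have := hg.continuousAt
    have := hh.continuousAt
    have := hh.deriv.continuousAt
    fun_prop
  have Φ_zero : Φ 0 = 0 :=
    tendsto_nhds_unique (Φ_cont.tendsto.mono_left nhdsWithin_le_nhds)
      ((tendsto_congr' Φ_eq_zero).mpr tendsto_const_nhds)
  -- The indicial equation at `0`, for the exponent `j + 1`.
  have indicial : (j * p 0 + q 0) * ((j + 1) * g 0) = 0 := by
    simpa [Φ_def, h_def, add_mul, mul_left_comm, mul_assoc] using Φ_zero
  exact mul_ne_zero (hpq j) (mul_ne_zero (Nat.cast_add_one_ne_zero j) hg0) indicial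

end SingularODE

section QuadraticTransformation

/-- The linear differential equation at the point `s`, regular singular at `0`, that is satisfied
by `F(a, a - b + 1/2; b + 1/2; s²)` and by `(1 + s)^(-2a) F(a, b; 2b; 4s/(1+s)²)`. It is stated
pointwise so that it can be verified wherever the two functions are smooth. -/
def SolvesQuadraticODE (a b : ℝ) (f : ℝ → ℝ) (s : ℝ) : Prop :=
  s * (1 - s ^ 2) * iteratedDeriv 2 f s + (2 * b - (4 * a - 2 * b + 2) * s ^ 2) * deriv f s
    - 2 * a * (2 * a - 2 * b + 1) * s * f s = 0

theorem SolvesQuadraticODE.sub {a b s : ℝ} {f g : ℝ → ℝ} (hf : SolvesQuadraticODE a b f s)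
    (hg : SolvesQuadraticODE a b g s) (hfs : ContDiffAt ℝ 2 f s) (hgs : ContDiffAt ℝ 2 g s) :
    SolvesQuadraticODE a b (f - g) s := by
  rw [SolvesQuadraticODE] at hf hg ⊢
  rw [iteratedDeriv_sub hfs hgs,
    deriv_sub (hfs.differentiableAt two_ne_zero) (hgs.differentiableAt two_ne_zero), Pi.sub_apply]
  linear_combination hf - hg

theorem SolvesHypergeometricODE.comp_sq {a b s : ℝ} {K : ℝ → ℝ}
    (hK : SolvesHypergeometricODE a (a - b + 1 / 2) (b + 1 / 2) K (s ^ 2))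
    (hKs : ContDiffAt ℝ 2 K (s ^ 2)) : SolvesQuadraticODE a b (fun t ↦ K (t ^ 2)) s := by
  have deriv_sq : deriv (fun t : ℝ ↦ t ^ 2) s = 2 * s := by simp
  have deriv_deriv_sq : iteratedDeriv 2 (fun t : ℝ ↦ t ^ 2) s = 2 := by simp
  have hsq : ContDiffAt ℝ 2 (fun t : ℝ ↦ t ^ 2) s := by fun_prop
  have deriv_K : deriv (fun t ↦ K (t ^ 2)) s = deriv K (s ^ 2) * (2 * s) := by
    rw [← deriv_sq]
    exact deriv_comp s (h₂ := K) (hKs.differentiableAt two_ne_zero) (by fun_prop)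
  have deriv_deriv_K : iteratedDeriv 2 (fun t ↦ K (t ^ 2)) s =
      iteratedDeriv 2 K (s ^ 2) * (2 * s) ^ 2 + deriv K (s ^ 2) * 2 := by
    rw [← deriv_sq, ← deriv_deriv_sq]
    exact iteratedDeriv_comp_two (g := K) hKs hsq
  rw [SolvesHypergeometricODE] at hK
  rw [SolvesQuadraticODE, deriv_K, deriv_deriv_K]
  linear_combination 4 * s * hK

theorem iteratedDeriv_two_eq_of_hasDerivAt {𝕜 F : Type*} [NontriviallyNormedField 𝕜]
    [NormedAddCommGroup F] [NormedSpace 𝕜 F] {f f' : 𝕜 → F} {f'' : F} {x : 𝕜}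
    (hf : ∀ᶠ y in 𝓝 x, HasDerivAt f (f' y) y) (hf' : HasDerivAt f' f'' x) :
    iteratedDeriv 2 f x = f'' := by
  rw [iteratedDeriv_succ, iteratedDeriv_one]
  exact (EventuallyEq.deriv_eq (hf.mono fun y hy ↦ hy.deriv)).trans hf'.deriv

/-- The substitution of Gauss's quadratic transformation. Its square root is Landen's change of
modulus `k ↦ 2√k / (1 + k)`, evaluated at `k = s`. -/
noncomputable def landenMap (s : ℝ) : ℝ := 4 * s / (1 + s) ^ 2

theorem hasDerivAt_landenMap {s : ℝ} (hs : 1 + s ≠ 0) :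
    HasDerivAt landenMap (4 * (1 - s) / (1 + s) ^ 3) s := by
  have h := ((hasDerivAt_id' s).const_mul 4).fun_div (((hasDerivAt_id' s).const_add 1).fun_pow 2)
    (pow_ne_zero 2 hs)
  refine h.congr_deriv ?_
  field_simp
  ring

theorem eventually_one_add_ne_zero {s : ℝ} (hs : 1 + s ≠ 0) : ∀ᶠ t in 𝓝 s, 1 + t ≠ 0 :=
  ContinuousAt.eventually_ne (by fun_prop) hs

theorem iteratedDeriv_two_landenMap {s : ℝ} (hs : 1 + s ≠ 0) :
    iteratedDeriv 2 landenMap s = (8 * s - 16) / (1 + s) ^ 4 := by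
  refine iteratedDeriv_two_eq_of_hasDerivAt
    ((eventually_one_add_ne_zero hs).mono fun t ht ↦ hasDerivAt_landenMap ht) ?_
  have h := (((hasDerivAt_id' s).const_sub 1).const_mul 4).fun_div
    (((hasDerivAt_id' s).const_add 1).fun_pow 3) (pow_ne_zero 3 hs)
  refine h.congr_deriv ?_
  field_simp
  ring

theorem contDiffAt_landenMap {s : ℝ} {n : WithTop ℕ∞} (hs : 1 + s ≠ 0) :
    ContDiffAt ℝ n landenMap s :=
  ContDiffAt.div (by fun_prop) (by fun_prop) (pow_ne_zero 2 hs)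

theorem hasDerivAt_one_add_rpow {s : ℝ} (hs : 1 + s ≠ 0) (p : ℝ) :
    HasDerivAt (fun t ↦ (1 + t) ^ p) (p * (1 + s) ^ (p - 1)) s := by
  simpa using ((hasDerivAt_id' s).const_add 1).rpow_const (p := p) (Or.inl hs)

theorem iteratedDeriv_two_one_add_rpow {s : ℝ} (hs : 1 + s ≠ 0) (p : ℝ) :
    iteratedDeriv 2 (fun t ↦ (1 + t) ^ p) s = p * ((p - 1) * (1 + s) ^ (p - 1 - 1)) :=
  iteratedDeriv_two_eq_of_hasDerivAt
    ((eventually_one_add_ne_zero hs).mono fun _ ht ↦ hasDerivAt_one_add_rpow ht p)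
    ((hasDerivAt_one_add_rpow hs (p - 1)).const_mul p)

theorem contDiffAt_one_add_rpow {s : ℝ} {n : WithTop ℕ∞} (hs : 1 + s ≠ 0) (p : ℝ) :
    ContDiffAt ℝ n (fun t ↦ (1 + t) ^ p) s :=
  ContDiffAt.rpow_const_of_ne (by fun_prop) hs

theorem iteratedDeriv_two_fun_mul {𝕜 : Type*} [NontriviallyNormedField 𝕜] {f g : 𝕜 → 𝕜} {x : 𝕜}
    (hf : ContDiffAt 𝕜 2 f x) (hg : ContDiffAt 𝕜 2 g x) :
    iteratedDeriv 2 (fun y ↦ f y * g y) x =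
      iteratedDeriv 2 f x * g x + 2 * deriv f x * deriv g x + f x * iteratedDeriv 2 g x := by
  rw [iteratedDeriv_fun_mul hf hg, Finset.sum_range_succ, Finset.sum_range_succ,
    Finset.sum_range_one]
  simp only [Nat.choose_zero_right, Nat.choose_one_right, Nat.choose_self, iteratedDeriv_zero,
    iteratedDeriv_one, Nat.sub_zero, Nat.sub_self, Nat.reduceSub, Nat.cast_one, Nat.cast_ofNat]
  ring

theorem SolvesHypergeometricODE.one_add_rpow_mul_comp_landenMap {a b s : ℝ} {F : ℝ → ℝ}
    (hF : SolvesHypergeometricODE a b (2 * b) F (landenMap s))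
    (hFs : ContDiffAt ℝ 2 F (landenMap s)) (hs : 1 + s ≠ 0) :
    SolvesQuadraticODE a b (fun t ↦ (1 + t) ^ (-(2 * a)) * F (landenMap t)) s := by
  have hE := contDiffAt_one_add_rpow (n := 2) hs (-(2 * a))
  have hφ := contDiffAt_landenMap (n := 2) hs
  have hG : ContDiffAt ℝ 2 (fun t ↦ F (landenMap t)) s := hFs.comp s hφ
  have deriv_G : deriv (fun t ↦ F (landenMap t)) s =
      deriv F (landenMap s) * (4 * (1 - s) / (1 + s) ^ 3) := by
    rw [← (hasDerivAt_landenMap hs).deriv]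
    exact deriv_comp s (hFs.differentiableAt two_ne_zero) (hφ.differentiableAt two_ne_zero)
  have deriv_deriv_G : iteratedDeriv 2 (fun t ↦ F (landenMap t)) s =
      iteratedDeriv 2 F (landenMap s) * (4 * (1 - s) / (1 + s) ^ 3) ^ 2 +
        deriv F (landenMap s) * ((8 * s - 16) / (1 + s) ^ 4) := by
    rw [← (hasDerivAt_landenMap hs).deriv, ← iteratedDeriv_two_landenMap hs]
    exact iteratedDeriv_comp_two hFs hφ
  rw [SolvesQuadraticODE, iteratedDeriv_two_fun_mul hE hG,
    deriv_fun_mul (hE.differentiableAt two_ne_zero) (hG.differentiableAt two_ne_zero),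
    deriv_deriv_G, deriv_G, iteratedDeriv_two_one_add_rpow hs,
    (hasDerivAt_one_add_rpow hs _).deriv, Real.rpow_sub_one hs, Real.rpow_sub_one hs]
  rw [SolvesHypergeometricODE] at hF
  generalize F (landenMap s) = F₀, deriv F (landenMap s) = F₁,
    iteratedDeriv 2 F (landenMap s) = F₂, (1 + s) ^ (-(2 * a)) = E at hF ⊢
  rw [landenMap] at hF
  linear_combination (norm := skip) 4 * (1 - s) / (1 + s) * E * hF
  field_simp
  ring

/-- The component of `0` in the region `|landenMap s| < 1`, on which the transformation holds:
the endpoints are the solutions of `landenMap s = -1` nearest to `0` and of `landenMap s = 1`. -/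
def landenInterval : Set ℝ := Set.Ioo (2 * √2 - 3) 1

theorem zero_mem_landenInterval : 0 ∈ landenInterval :=
  ⟨by nlinarith [Real.sq_sqrt zero_le_two], one_pos⟩

theorem abs_lt_one_of_mem_landenInterval {s : ℝ} (hs : s ∈ landenInterval) : |s| < 1 := by
  have one_lt_sqrt_two : 1 < √2 := Real.lt_sqrt_of_sq_lt (by norm_num)
  exact abs_lt.mpr ⟨by linarith [hs.1], hs.2⟩

theorem one_add_pos_of_mem_landenInterval {s : ℝ} (hs : s ∈ landenInterval) : 0 < 1 + s := by
  linarith [(abs_lt.mp (abs_lt_one_of_mem_landenInterval hs)).1]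

theorem abs_landenMap_lt_one {s : ℝ} (hs : s ∈ landenInterval) : |landenMap s| < 1 := by
  have one_add_pos := one_add_pos_of_mem_landenInterval hs
  obtain ⟨hs1, hs2⟩ := hs
  have sqrt_two_sq : √2 ^ 2 = 2 := Real.sq_sqrt zero_le_two
  rw [landenMap, abs_lt, lt_div_iff₀ (by positivity), div_lt_one (by positivity)]
  constructor <;> nlinarith [Real.sqrt_nonneg 2]

theorem eqOn_of_solvesQuadraticODE {a b : ℝ} (hb : ∀ k : ℕ, 2 * b ≠ -k) {f g : ℝ → ℝ} {I : Set ℝ}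
    (hI : IsPreconnected I) (hI0 : 0 ∈ I) (hf : AnalyticOnNhd ℝ f I) (hg : AnalyticOnNhd ℝ g I)
    (hf_ode : ∀ᶠ s in 𝓝 0, SolvesQuadraticODE a b f s)
    (hg_ode : ∀ᶠ s in 𝓝 0, SolvesQuadraticODE a b g s) (hfg : f 0 = g 0) : Set.EqOn f g I := by
  refine hf.eqOn_of_preconnected_of_eventuallyEq hg hI hI0 ?_
  have hf0 := hf 0 hI0
  have hg0 := hg 0 hI0
  have sub_eq_zero_near : ∀ᶠ s in 𝓝 0, (f - g) s = 0 := by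
    refine eventually_eq_zero_of_singular_ode (p := fun s ↦ 1 - s ^ 2)
      (q := fun s ↦ 2 * b - (4 * a - 2 * b + 2) * s ^ 2)
      (r := fun s ↦ -(2 * a * (2 * a - 2 * b + 1) * s)) (by fun_prop) (by fun_prop) (by fun_prop)
      (fun j hj ↦ hb j ?_) (hf0.sub hg0) (by simp [hfg]) ?_
    · linear_combination hj
    · filter_upwards [hf_ode, hg_ode, hf0.eventually_analyticAt, hg0.eventually_analyticAt]
        with s hfs hgs hfs' hgs'
      have h := hfs.sub hgs hfs'.contDiffAt hgs'.contDiffAt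
      rw [SolvesQuadraticODE] at h
      linear_combination h
  exact sub_eq_zero_near.mono fun s hs ↦ sub_eq_zero.mp hs

theorem eqOn_one_add_rpow_mul_comp_landenMap (a b : ℝ) (hb : ∀ k : ℕ, 2 * b ≠ -k) :
    Set.EqOn (fun s ↦ (1 + s) ^ (-(2 * a)) * ₂F₁ a b (2 * b) (landenMap s))
      (fun s ↦ ₂F₁ a (a - b + 1 / 2) (b + 1 / 2) (s ^ 2)) landenInterval := by
  have hI : landenInterval ∈ 𝓝 0 := isOpen_Ioo.mem_nhds zero_mem_landenInterval
  have one_add_ne {s : ℝ} (hs : s ∈ landenInterval) : 1 + s ≠ 0 :=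
    (one_add_pos_of_mem_landenInterval hs).ne'
  have norm_sq_lt {s : ℝ} (hs : s ∈ landenInterval) : ‖s ^ 2‖ < 1 := by
    simpa using abs_lt_one_of_mem_landenInterval hs
  have hF {s : ℝ} (hs : s ∈ landenInterval) :=
    analyticAt_ordinaryHypergeometric a b (2 * b) (abs_landenMap_lt_one hs)
  have hK {s : ℝ} (hs : s ∈ landenInterval) :=
    analyticAt_ordinaryHypergeometric a (a - b + 1 / 2) (b + 1 / 2) (norm_sq_lt hs)
  have hb' (k : ℕ) : b + 1 / 2 ≠ -k := fun h ↦
    hb (2 * k + 1) (by push_cast; linear_combination 2 * h)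
  refine eqOn_of_solvesQuadraticODE (a := a) hb isPreconnected_Ioo zero_mem_landenInterval
    (fun s hs ↦ ?_) (fun s hs ↦ (hK hs).comp (f := (· ^ 2)) (by fun_prop)) ?_ ?_ ?_
  · exact (contDiffAt_one_add_rpow (one_add_ne hs) _).analyticAt.mul
      ((hF hs).comp (contDiffAt_landenMap (one_add_ne hs)).analyticAt)
  · filter_upwards [hI] with s hs
    exact (solvesHypergeometricODE_ordinaryHypergeometric a b hb
      (abs_landenMap_lt_one hs)).one_add_rpow_mul_comp_landenMap (hF hs).contDiffAt (one_add_ne hs)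
  · filter_upwards [hI] with s hs
    exact (solvesHypergeometricODE_ordinaryHypergeometric a _ hb' (norm_sq_lt hs)).comp_sq
      (hK hs).contDiffAt
  · simp [landenMap]

end QuadraticTransformation

theorem statement10_general (a b : ℝ) (hb : ∀ k : ℕ, 2 * b ≠ -k) {s : ℝ}
    (hs_left : 2 * √2 - 3 < s) (hs_right : s < 1) :
    hypF a b (2 * b) (4 * s / (1 + s) ^ 2) =
      (1 + s) ^ (2 * a) * hypF a (a - b + 1 / 2) (b + 1 / 2) (s ^ 2) := by
  have hs : s ∈ landenInterval := ⟨hs_left, hs_right⟩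
  have one_add_pos := one_add_pos_of_mem_landenInterval hs
  have h := eqOn_one_add_rpow_mul_comp_landenMap a b hb hs
  simp only [landenMap] at h
  rw [hypF_eq_ordinaryHypergeometric, hypF_eq_ordinaryHypergeometric, ← h,
    Real.rpow_neg one_add_pos.le, mul_inv_cancel_left₀ (by positivity)]

theorem statement10 (n : ℕ) (hn : 2 ≤ n) (lam : ℝ)
    (hc1 : ∀ k : ℕ, 2 * lam - (n : ℝ) + 2 ≠ -(k : ℝ))
    (hc2 : ∀ k : ℕ, lam - ((n : ℝ) - 3) / 2 ≠ -(k : ℝ)) :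
    ∀ s : ℝ, 0 < s → s < 1 →
      hypF lam (lam - (n : ℝ) / 2 + 1) (2 * lam - (n : ℝ) + 2) (4 * s / (1 + s) ^ 2) =
        (1 + s) ^ (2 * lam) *
          hypF lam (((n : ℝ) - 1) / 2) (lam - ((n : ℝ) - 3) / 2) (s ^ 2) := by
  intro s hs0 hs1
  have hs_left : 2 * √2 - 3 < s := by nlinarith [Real.sq_sqrt zero_le_two]
  have hb (k : ℕ) : 2 * (lam - n / 2 + 1) ≠ -k := by
    convert hc1 k using 1
    ring
  convert statement10_general lam (lam - n / 2 + 1) hb hs_left hs1 using 3 <;> ring
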